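/- Let n ≥ 3. The coefficients in the lifted inequalities DL-1 and DL-2 are maximal among valid inequalities, in the following sense: (a) if a ∈ ℝ is such that 1 + (1 − x_{0j}) + a·x_{j,n+1} ≤ u(j) holds for every drone tour and every intermediate node j ∈ {1,…,n}, then a ≤ n − 2; (b) if b ∈ ℝ is such that u(j) ≤ (n + 1) − b·x_{0j} − (1 − x_{j,n+1}) holds for every drone tour and every intermediate node j, then b ≤ n − 1; (c) if c ∈ ℝ is such that u(i) − u(j) + (n + 1)·x_{ij} + c·x_{ji} ≤ n holds for every drone tour and every arc (i,j) ∈ A with i ≠ 0, then c ≤ n − 1. -/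

import Mathlib

/-- Real-valued arc indicator of a drone tour on the node set `H = {0, 1, …, n+1}`
(modelled as `Fin (n+2)`): `xind n u i j = 1` iff `(i,j)` is in the arc set
`A = {(i,j) : i ≠ j, i ≠ n+1, j ≠ 0}` and `j` is visited immediately after `i`
(i.e. `u j = u i + 1`); by convention it is `0` for pairs outside `A`. -/
def xind (n : ℕ) (u : Fin (n + 2) → Fin (n + 2)) (i j : Fin (n + 2)) : ℝ :=
  if i ≠ j ∧ i ≠ Fin.last (n + 1) ∧ j ≠ 0 ∧ (u j : ℕ) = (u i : ℕ) + 1 then 1 else 0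

/-- A drone tour on `H = {0, …, n+1}`: a bijection `u` of `Fin (n+2)` (the rank map)
with `u 0 = 0` and `u (n+1) = n+1`. -/
def IsDroneTour (n : ℕ) (u : Fin (n + 2) → Fin (n + 2)) : Prop :=
  Function.Bijective u ∧ u 0 = 0 ∧ u (Fin.last (n + 1)) = Fin.last (n + 1)

/-- Coefficient maximality in the proof of Proposition 2: the coefficients `n − 2`,
`n − 1` and `n − 1` in the lifted MTZ inequalities DL-1 and DL-2 are the largest real
coefficients for which the corresponding inequalities remain valid for all drone
tours. -/
theorem dl_coefficients_maximal (n : ℕ) (hn : 3 ≤ n) :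
    (∀ a : ℝ,
      (∀ u : Fin (n + 2) → Fin (n + 2), IsDroneTour n u →
        ∀ j : Fin (n + 2), j ≠ 0 → j ≠ Fin.last (n + 1) →
          1 + (1 - xind n u 0 j) + a * xind n u j (Fin.last (n + 1)) ≤ ((u j : ℕ) : ℝ)) →
      a ≤ (n : ℝ) - 2) ∧
    (∀ b : ℝ,
      (∀ u : Fin (n + 2) → Fin (n + 2), IsDroneTour n u →
        ∀ j : Fin (n + 2), j ≠ 0 → j ≠ Fin.last (n + 1) →
          ((u j : ℕ) : ℝ) ≤ ((n : ℝ) + 1) - b * xind n u 0 j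
            - (1 - xind n u j (Fin.last (n + 1)))) →
      b ≤ (n : ℝ) - 1) ∧
    (∀ c : ℝ,
      (∀ u : Fin (n + 2) → Fin (n + 2), IsDroneTour n u →
        ∀ i j : Fin (n + 2), i ≠ j → i ≠ Fin.last (n + 1) → j ≠ 0 → i ≠ 0 →
          ((u i : ℕ) : ℝ) - ((u j : ℕ) : ℝ) + ((n : ℝ) + 1) * xind n u i j
            + c * xind n u j i ≤ (n : ℝ)) →
      c ≤ (n : ℝ) - 1) := by
  have hid : IsDroneTour n id := ⟨Function.bijective_id, rfl, rfl⟩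
  refine ⟨fun a h => ?_, fun b h => ?_, fun c h => ?_⟩
  · have h1 := h id hid ⟨n, by omega⟩ (by simp [Fin.ext_iff]; omega) (by simp [Fin.ext_iff])
    have e1 : xind n id 0 ⟨n, by omega⟩ = 0 := by
      unfold xind
      rw [if_neg]
      simp [Fin.ext_iff]
      omega
    have e2 : xind n id ⟨n, by omega⟩ (Fin.last (n + 1)) = 1 := by
      unfold xind
      rw [if_pos]
      simp [Fin.ext_iff]
    rw [e1, e2] at h1
    simp only [id] at h1
    linarith
  · have h1 := h id hid ⟨1, by omega⟩ (by simp [Fin.ext_iff]) (by simp [Fin.ext_iff]; omega)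
    have e1 : xind n id 0 ⟨1, by omega⟩ = 1 := by
      unfold xind
      rw [if_pos]
      simp [Fin.ext_iff]
    have e2 : xind n id ⟨1, by omega⟩ (Fin.last (n + 1)) = 0 := by
      unfold xind
      rw [if_neg]
      simp [Fin.ext_iff]
      omega
    rw [e1, e2] at h1
    simp only [id, Nat.cast_one] at h1
    linarith
  · have h1 := h id hid ⟨2, by omega⟩ ⟨1, by omega⟩ (by simp [Fin.ext_iff])
      (by simp [Fin.ext_iff]; omega) (by simp [Fin.ext_iff]) (by simp [Fin.ext_iff])
    have e1 : xind n id ⟨2, by omega⟩ ⟨1, by omega⟩ = 0 := by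
      unfold xind
      rw [if_neg]
      simp [Fin.ext_iff]
    have e2 : xind n id ⟨1, by omega⟩ ⟨2, by omega⟩ = 1 := by
      unfold xind
      rw [if_pos]
      simp [Fin.ext_iff]
      omega
    rw [e1, e2] at h1
    simp only [id, Nat.cast_one, Nat.cast_ofNat] at h1
    linarith
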